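/- Let c > 0, let 𝒜⁰ : ℝ × ℝ³ → ℝ and 𝓐 : ℝ × ℝ³ → ℝ³ be C², let θ and γ⁻¹ be C¹ functions on ℝ × ℝ³ with γ ≥ 1, and suppose the barotropic equation of motion ℰ + (v/c)×ℬ = −(cγ)⁻¹ ∇θ holds everywhere, where ℰ = −∇𝒜⁰ − c⁻¹∂_t𝓐, ℬ = ∇×𝓐, and v is the velocity field with γ = (1 − |v|²/c²)^{−1/2}. Assume there is a compact set 𝒦 ⊂ ℝ³ such that 𝓐(t, ·) is supported in 𝒦 for all t in an open interval I. Then the semi-relativistic helicity C(t) = ∫_{ℝ³} (𝓐·ℬ)(t, x) d³x is differentiable on I and dC/dt = 2 ∫_{ℝ³} γ⁻¹ ℬ·∇θ d³x = −2 ∫_{ℝ³} θ ℬ·∇(γ⁻¹) d³x. -/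

import Mathlib

open MeasureTheory

noncomputable section

abbrev V3 := Fin 3 → ℝ

/-- Euclidean dot product on ℝ³. -/
def dot3 (a b : V3) : ℝ := ∑ i, a i * b i

/-- Cross product on ℝ³. -/
def cross3 (a b : V3) : V3 := fun i => a (i + 1) * b (i + 2) - a (i + 2) * b (i + 1)

/-- Time derivative ∂_t of a scalar function on ℝ × ℝ³. -/
def pdt (f : ℝ × V3 → ℝ) (p : ℝ × V3) : ℝ := fderiv ℝ f p ((1 : ℝ), (0 : V3))

/-- Spatial derivative ∂_j of a scalar function on ℝ × ℝ³. -/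
def pdx (j : Fin 3) (f : ℝ × V3 → ℝ) (p : ℝ × V3) : ℝ :=
  fderiv ℝ f p ((0 : ℝ), Pi.single j 1)

/-- Spatial gradient. -/
def grad3 (f : ℝ × V3 → ℝ) (p : ℝ × V3) : V3 := fun j => pdx j f p

/-- Spatial curl. -/
def curl3 (A : ℝ × V3 → V3) (p : ℝ × V3) : V3 := fun i =>
  pdx (i + 1) (fun q => A q (i + 2)) p - pdx (i + 2) (fun q => A q (i + 1)) p

/-- Spatial divergence. -/
def div3 (A : ℝ × V3 → V3) (p : ℝ × V3) : ℝ := ∑ j, pdx j (fun q => A q j) p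

/-- ℰ = −∇𝒜⁰ − c⁻¹ ∂_t 𝓐. -/
def Efield (c : ℝ) (A0 : ℝ × V3 → ℝ) (A : ℝ × V3 → V3) (p : ℝ × V3) : V3 := fun i =>
  -grad3 A0 p i - c⁻¹ * fderiv ℝ (fun q => A q i) p ((1 : ℝ), (0 : V3))

/-- ℬ = ∇×𝓐. -/
def Bfield (A : ℝ × V3 → V3) (p : ℝ × V3) : V3 := curl3 A p

/-- The Lorentz factor γ = (1 − |v|²/c²)^(−1/2). -/
def gamma3 (c : ℝ) (v : ℝ × V3 → V3) (p : ℝ × V3) : ℝ :=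
  (Real.sqrt (1 - dot3 (v p) (v p) / c ^ 2))⁻¹

/-- The semi-relativistic helicity C(t) = ∫_{ℝ³} 𝓐·ℬ d³x. -/
def semiHelicity (A : ℝ × V3 → V3) (t : ℝ) : ℝ :=
  ∫ x : V3, dot3 (A (t, x)) (Bfield A (t, x))

/-!
Since `𝓐` has compact support, `∫ 𝓐 · (∇ × 𝓒) = ∫ (∇ × 𝓐) · 𝓒`, so differentiating under the
integral gives `dC/dt = 2 ∫ ℬ · ∂ₜ𝓐`. As `ℬ` is divergence free, the term `c ∇𝒜⁰` in
`∂ₜ𝓐 = -c ℰ - c ∇𝒜⁰` contributes nothing, and `dC/dt = -2c ∫ ℬ · ℰ`. The magnetic part of the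
equation of motion is orthogonal to `ℬ`, so `-c ℬ · ℰ = γ⁻¹ ℬ · ∇θ` pointwise. The second formula
is integration by parts, `∇ · (γ⁻¹ θ ℬ) = ℬ · ∇(γ⁻¹ θ)`.
-/

lemma integrable_slice {T X F : Type*} [TopologicalSpace T] [TopologicalSpace X]
    [NormedAddCommGroup F] [MeasurableSpace X] [OpensMeasurableSpace X] {μ : Measure X}
    [IsFiniteMeasureOnCompacts μ] {f : T × X → F} {t : T} (hf : Continuous f)
    (hft : HasCompactSupport fun x => f (t, x)) :
    Integrable (fun x => f (t, x)) μ :=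
  (hf.comp (.prodMk_right t)).integrable_of_hasCompactSupport hft

section Calculus

open scoped Topology

variable {E F : Type*} [NormedAddCommGroup E] [NormedSpace ℝ E]
  [NormedAddCommGroup F] [NormedSpace ℝ F]

lemma fderiv_fderiv_apply_comm {f : E → F} {x : E} (hf : ContDiffAt ℝ 2 f x) (u w : E) :
    fderiv ℝ (fun y => fderiv ℝ f y w) x u = fderiv ℝ (fun y => fderiv ℝ f y u) x w := by
  have hf' : DifferentiableAt ℝ (fderiv ℝ f) x :=
    (hf.fderiv_right (m := 1) (by norm_num)).differentiableAt one_ne_zero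
  have iterated (v w : E) :
      fderiv ℝ (fun y => fderiv ℝ f y w) x v = fderiv ℝ (fderiv ℝ f) x v w := by
    simp [(hf'.hasFDerivAt.clm_apply (hasFDerivAt_const w x)).fderiv]
  simpa only [iterated] using hf.isSymmSndFDerivAt (by simp) u w

lemma hasDerivAt_prodMk_slice {g : ℝ × E → F} {s : ℝ} {x : E}
    (hg : DifferentiableAt ℝ g (s, x)) :
    HasDerivAt (fun r => g (r, x)) (fderiv ℝ g (s, x) (1, 0)) s :=
  hg.hasFDerivAt.comp_hasDerivAt s ((hasDerivAt_id s).prodMk (hasDerivAt_const s x))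

lemma hasDerivAt_integral_of_contDiff_of_eq_zero [MeasurableSpace E] [OpensMeasurableSpace E]
    {μ : Measure E} [IsFiniteMeasureOnCompacts μ] {g : ℝ × E → F} (hg : ContDiff ℝ 1 g)
    {K : Set E} (hK : IsCompact K) {t : ℝ} (hgK : ∀ᶠ s in 𝓝 t, ∀ x ∉ K, g (s, x) = 0) :
    HasDerivAt (fun s => ∫ x, g (s, x) ∂μ) (∫ x, fderiv ℝ g (t, x) (1, 0) ∂μ) t := by
  have slice_deriv (s : ℝ) (x : E) : HasDerivAt (fun r => g (r, x)) (fderiv ℝ g (s, x) (1, 0)) s :=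
    hasDerivAt_prodMk_slice (hg.differentiable one_ne_zero (s, x))
  have deriv_eq_zero {s : ℝ} (hs : ∀ᶠ r in 𝓝 s, ∀ x ∉ K, g (r, x) = 0) {x : E} (hx : x ∉ K) :
      fderiv ℝ g (s, x) (1, 0) = 0 := by
    have slice_zero : (fun r => g (r, x)) =ᶠ[𝓝 s] fun _ => 0 := hs.mono fun r hr => hr x hx
    exact (slice_deriv s x).unique ((hasDerivAt_const s 0).congr_of_eventuallyEq slice_zero)
  have hg' : Continuous fun p => fderiv ℝ g p (1, 0) :=
    (hg.continuous_fderiv one_ne_zero).clm_apply continuous_const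
  obtain ⟨ε, hε, hball⟩ :=
    Metric.nhds_basis_closedBall.eventually_iff.1 (eventually_eventually_nhds.2 hgK)
  obtain ⟨M, hM⟩ := ((isCompact_closedBall t ε).prod hK).exists_bound_of_continuousOn
    hg'.continuousOn
  refine (hasDerivAt_integral_of_dominated_loc_of_deriv_le (bound := K.indicator fun _ => M)
    (Metric.closedBall_mem_nhds t hε)
    (hgK.mono fun s hs => (integrable_slice hg.continuous (.intro hK hs)).aestronglyMeasurable)
    (integrable_slice hg.continuous (.intro hK hgK.self_of_nhds))
    (integrable_slice hg' (.intro hK fun x => deriv_eq_zero hgK)).aestronglyMeasurable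
    (.of_forall fun x s hs => ?_)
    ((integrable_indicator_iff hK.isClosed.measurableSet).2
      (integrableOn_const hK.measure_lt_top.ne))
    (.of_forall fun x s _ => slice_deriv s x)).2
  by_cases hx : x ∈ K
  · simpa only [Set.indicator_of_mem hx] using hM (s, x) ⟨hs, hx⟩
  · simp only [Set.indicator_of_notMem hx, deriv_eq_zero (hball hs) hx, norm_zero, le_refl]

end Calculus

section VectorCalculus

open scoped ContDiff

/-- The time derivative ∂_t of a vector field, taken componentwise like the other operators. -/
def pdt3 (A : ℝ × V3 → V3) (p : ℝ × V3) : V3 := fun i => pdt (fun q => A q i) p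

lemma dot3_cross3_self (a b : V3) : dot3 b (cross3 a b) = 0 := by
  simp only [dot3, cross3, Fin.sum_univ_three, Fin.reduceAdd]
  ring

variable {m n : ℕ∞ω} {f g : ℝ × V3 → ℝ} {A C : ℝ × V3 → V3}

lemma contDiff_dot3 (hA : ContDiff ℝ n A) (hC : ContDiff ℝ n C) :
    ContDiff ℝ n fun p => dot3 (A p) (C p) :=
  .sum fun i _ => (contDiff_pi.1 hA i).mul (contDiff_pi.1 hC i)

lemma contDiff_cross3 (hA : ContDiff ℝ n A) (hC : ContDiff ℝ n C) :
    ContDiff ℝ n fun p => cross3 (A p) (C p) :=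
  contDiff_pi.2 fun _ => ((contDiff_pi.1 hA _).mul (contDiff_pi.1 hC _)).sub
    ((contDiff_pi.1 hA _).mul (contDiff_pi.1 hC _))

lemma contDiff_grad3 (hf : ContDiff ℝ n f) (hmn : m + 1 ≤ n) : ContDiff ℝ m (grad3 f) :=
  contDiff_pi.2 fun _ => (hf.fderiv_right hmn).clm_apply contDiff_const

lemma contDiff_curl3 (hA : ContDiff ℝ n A) (hmn : m + 1 ≤ n) : ContDiff ℝ m (curl3 A) :=
  have hdA (i j : Fin 3) : ContDiff ℝ m (pdx j fun q => A q i) :=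
    contDiff_pi.1 (contDiff_grad3 (contDiff_pi.1 hA i) hmn) j
  contDiff_pi.2 fun i => (hdA (i + 2) (i + 1)).sub (hdA (i + 1) (i + 2))

lemma continuous_grad3 (hf : ContDiff ℝ 1 f) : Continuous (grad3 f) :=
  (contDiff_grad3 (m := 0) hf (by norm_num)).continuous

lemma continuous_curl3 (hA : ContDiff ℝ 1 A) : Continuous (curl3 A) :=
  (contDiff_curl3 (m := 0) hA (by norm_num)).continuous

lemma contDiff_pdt3 (hA : ContDiff ℝ n A) (hmn : m + 1 ≤ n) : ContDiff ℝ m (pdt3 A) :=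
  contDiff_pi.2 fun i => ((contDiff_pi.1 hA i).fderiv_right hmn).clm_apply contDiff_const

variable {p : ℝ × V3}

lemma pdx_mul (hf : DifferentiableAt ℝ f p) (hg : DifferentiableAt ℝ g p) (j : Fin 3) :
    pdx j (fun q => f q * g q) p = f p * pdx j g p + g p * pdx j f p := by
  simp [pdx, fderiv_fun_mul hf hg]

lemma pdx_sub (hf : DifferentiableAt ℝ f p) (hg : DifferentiableAt ℝ g p) (j : Fin 3) :
    pdx j (fun q => f q - g q) p = pdx j f p - pdx j g p := by
  simp [pdx, fderiv_fun_sub hf hg]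

lemma differentiable_pdx (hf : ContDiff ℝ 2 f) (j : Fin 3) : Differentiable ℝ (pdx j f) :=
  (contDiff_pi.1 (contDiff_grad3 (m := 1) hf (by norm_num)) j).differentiable one_ne_zero

lemma pdx_comm (hf : ContDiffAt ℝ 2 f p) (j k : Fin 3) :
    pdx j (pdx k f) p = pdx k (pdx j f) p :=
  fderiv_fderiv_apply_comm hf _ _

lemma pdt_pdx_comm (hf : ContDiffAt ℝ 2 f p) (j : Fin 3) :
    pdt (pdx j f) p = pdx j (pdt f) p :=
  fderiv_fderiv_apply_comm hf _ _

lemma grad3_mul (hf : DifferentiableAt ℝ f p) (hg : DifferentiableAt ℝ g p) :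
    grad3 (fun q => f q * g q) p = f p • grad3 g p + g p • grad3 f p :=
  funext (pdx_mul hf hg)

lemma pdt_dot3 (hA : DifferentiableAt ℝ A p) (hC : DifferentiableAt ℝ C p) :
    pdt (fun q => dot3 (A q) (C q)) p = dot3 (A p) (pdt3 C p) + dot3 (C p) (pdt3 A p) := by
  have hAi := differentiableAt_pi.1 hA
  have hCi := differentiableAt_pi.1 hC
  simp only [pdt, pdt3, dot3]
  rw [fderiv_fun_sum fun i _ => (hAi i).fun_mul (hCi i)]
  simp [fderiv_fun_mul (hAi _) (hCi _), Finset.sum_add_distrib]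

lemma div3_smul (hf : DifferentiableAt ℝ f p) (hA : DifferentiableAt ℝ A p) :
    div3 (fun q => f q • A q) p = f p * div3 A p + dot3 (A p) (grad3 f p) := by
  simp only [div3, dot3, grad3, Pi.smul_apply, smul_eq_mul, Finset.mul_sum,
    pdx_mul hf (differentiableAt_pi.1 hA _), Finset.sum_add_distrib]

lemma div3_cross3 (hA : DifferentiableAt ℝ A p) (hC : DifferentiableAt ℝ C p) :
    div3 (fun q => cross3 (A q) (C q)) p = dot3 (curl3 A p) (C p) - dot3 (A p) (curl3 C p) := by
  have hAi := differentiableAt_pi.1 hA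
  have hCi := differentiableAt_pi.1 hC
  simp only [div3, cross3, dot3, curl3, Fin.sum_univ_three, Fin.reduceAdd,
    pdx_sub ((hAi _).fun_mul (hCi _)) ((hAi _).fun_mul (hCi _)), pdx_mul (hAi _) (hCi _)]
  ring

lemma div3_curl3 (hA : ContDiff ℝ 2 A) (p : ℝ × V3) : div3 (curl3 A) p = 0 := by
  have hdA (i j : Fin 3) : DifferentiableAt ℝ (pdx j fun q => A q i) p :=
    differentiable_pdx (contDiff_pi.1 hA i) j p
  have hcomm (i j k : Fin 3) := pdx_comm (p := p) (contDiff_pi.1 hA i).contDiffAt j k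
  simp only [div3, curl3, Fin.sum_univ_three, Fin.reduceAdd, pdx_sub (hdA _ _) (hdA _ _)]
  linear_combination hcomm 2 0 1 + hcomm 0 1 2 + hcomm 1 2 0

lemma pdt3_curl3 (hA : ContDiff ℝ 2 A) : pdt3 (curl3 A) = curl3 (pdt3 A) := by
  ext p i
  have hdA (i j : Fin 3) : DifferentiableAt ℝ (pdx j fun q => A q i) p :=
    differentiable_pdx (contDiff_pi.1 hA i) j p
  calc pdt3 (curl3 A) p i
      = pdt (pdx (i + 1) fun q => A q (i + 2)) p - pdt (pdx (i + 2) fun q => A q (i + 1)) p := by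
        simp only [pdt3, pdt, curl3, fderiv_fun_sub (hdA _ _) (hdA _ _), sub_apply]
    _ = curl3 (pdt3 A) p i := by
        rw [pdt_pdx_comm (contDiff_pi.1 hA _).contDiffAt,
          pdt_pdx_comm (contDiff_pi.1 hA _).contDiffAt]
        rfl

end VectorCalculus

section SpatialIntegrals

open scoped Topology

variable {f g : ℝ × V3 → ℝ} {A B C : ℝ × V3 → V3} {t : ℝ}

lemma pdx_eq_fderiv_slice {x : V3} (hf : DifferentiableAt ℝ f (t, x)) (j : Fin 3) :
    pdx j f (t, x) = fderiv ℝ (fun y => f (t, y)) x (Pi.single j 1) := by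
  have hslice : HasFDerivAt (fun y => f (t, y)) (fderiv ℝ f (t, x) ∘L .inr ℝ ℝ V3) x :=
    hf.hasFDerivAt.comp x (hasFDerivAt_prodMk_right t x)
  simp [pdx, hslice.fderiv]

lemma hasCompactSupport_curl3 (hA : Differentiable ℝ A)
    (hAt : HasCompactSupport fun x => A (t, x)) :
    HasCompactSupport fun x => curl3 A (t, x) := by
  refine hAt.mono' fun x => not_imp_not.1 fun hx => ?_
  have slice_zero (i : Fin 3) : (fun y => A (t, y) i) =ᶠ[𝓝 x] 0 :=
    (notMem_tsupport_iff_eventuallyEq.1 hx).mono fun y hy => congrFun hy i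
  have pdx_zero (i j : Fin 3) : pdx j (fun q => A q i) (t, x) = 0 := by
    rw [pdx_eq_fderiv_slice (differentiableAt_pi.1 (hA _) i), (slice_zero i).fderiv_eq]
    simp
  simpa [funext_iff, curl3] using fun i => by rw [pdx_zero, pdx_zero, sub_zero]

lemma integrable_dot3 (hA : Continuous A) (hC : Continuous C)
    (hAt : HasCompactSupport fun x => A (t, x)) :
    Integrable fun x => dot3 (A (t, x)) (C (t, x)) :=
  integrable_slice (contDiff_dot3 (contDiff_zero.2 hA) (contDiff_zero.2 hC)).continuous
    (hAt.mono fun x => not_imp_not.1 fun hx => by simp_all [dot3])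

lemma integrable_mul_dot3 (hf : Continuous f) (hA : Continuous A) (hC : Continuous C)
    (hAt : HasCompactSupport fun x => A (t, x)) :
    Integrable fun x => f (t, x) * dot3 (A (t, x)) (C (t, x)) := by
  have hsmul := integrable_dot3 hA (hf.smul hC) hAt
  simpa only [dot3, Pi.smul_apply', Pi.smul_apply, smul_eq_mul, Finset.mul_sum, mul_left_comm]
    using hsmul

lemma integrable_pdx (hf : ContDiff ℝ 1 f) (hft : HasCompactSupport fun x => f (t, x))
    (j : Fin 3) : Integrable fun x => pdx j f (t, x) := by
  have hslice : ContDiff ℝ 1 fun x => f (t, x) := hf.comp (contDiff_prodMk_right t)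
  simpa only [pdx_eq_fderiv_slice (hf.differentiable one_ne_zero _) j] using
    ((hslice.continuous_fderiv one_ne_zero).clm_apply
      continuous_const).integrable_of_hasCompactSupport (hft.fderiv_apply ℝ (Pi.single j 1))

lemma integral_pdx_eq_zero (hf : ContDiff ℝ 1 f) (hft : HasCompactSupport fun x => f (t, x))
    (j : Fin 3) : ∫ x, pdx j f (t, x) = 0 := by
  have hslice : ContDiff ℝ 1 fun x => f (t, x) := hf.comp (contDiff_prodMk_right t)
  have hint := integrable_pdx hf hft j
  simp only [pdx_eq_fderiv_slice (hf.differentiable one_ne_zero _) j] at hint ⊢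
  simpa using integral_mul_fderiv_eq_neg_fderiv_mul_of_integrable (μ := volume)
    (f := fun _ => (1 : ℝ)) (by simp) (by simpa using hint)
    (by simpa using integrable_slice hf.continuous hft)
    (by simp) (fun x _ => hslice.differentiable one_ne_zero x)

theorem integral_div3_eq_zero (hA : ContDiff ℝ 1 A) (hAt : HasCompactSupport fun x => A (t, x)) :
    ∫ x, div3 A (t, x) = 0 := by
  have hAi := contDiff_pi.1 hA
  have hAti (i : Fin 3) : HasCompactSupport fun x => A (t, x) i :=
    hAt.comp_left (g := fun a : V3 => a i) rfl
  simp only [div3]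
  rw [integral_finsetSum _ fun j _ => integrable_pdx (hAi j) (hAti j) j]
  exact Finset.sum_eq_zero fun j _ => integral_pdx_eq_zero (hAi j) (hAti j) j

theorem integral_dot3_curl3_comm (hA : ContDiff ℝ 1 A) (hC : ContDiff ℝ 1 C)
    (hAt : HasCompactSupport fun x => A (t, x)) :
    ∫ x, dot3 (A (t, x)) (curl3 C (t, x)) = ∫ x, dot3 (curl3 A (t, x)) (C (t, x)) := by
  have hA' := hA.differentiable one_ne_zero
  have hcross : HasCompactSupport fun x => cross3 (A (t, x)) (C (t, x)) :=
    hAt.mono fun x => not_imp_not.1 fun hx => by simp_all [cross3, funext_iff]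
  have hdiv := integral_div3_eq_zero (contDiff_cross3 hA hC) hcross
  simp only [div3_cross3 (hA' _) (hC.differentiable one_ne_zero _)] at hdiv
  rw [integral_sub
    (integrable_dot3 (continuous_curl3 hA) hC.continuous (hasCompactSupport_curl3 hA' hAt))
    (integrable_dot3 hA.continuous (continuous_curl3 hC) hAt),
    sub_eq_zero] at hdiv
  exact hdiv.symm

theorem integral_dot3_grad3_eq_zero (hB : ContDiff ℝ 1 B) (hdivB : ∀ x, div3 B (t, x) = 0)
    (hBt : HasCompactSupport fun x => B (t, x)) (hf : ContDiff ℝ 1 f) :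
    ∫ x, dot3 (B (t, x)) (grad3 f (t, x)) = 0 := by
  have hdiv : ∫ x, div3 (fun q => f q • B q) (t, x) = 0 :=
    integral_div3_eq_zero (hf.smul hB) (hBt.smul_left (f := fun x => f (t, x)))
  simpa only [div3_smul (hf.differentiable one_ne_zero _) (hB.differentiable one_ne_zero _),
    hdivB, mul_zero, zero_add] using hdiv

theorem integral_mul_dot3_grad3 (hB : ContDiff ℝ 1 B) (hdivB : ∀ x, div3 B (t, x) = 0)
    (hBt : HasCompactSupport fun x => B (t, x)) (hf : ContDiff ℝ 1 f) (hg : ContDiff ℝ 1 g) :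
    ∫ x, f (t, x) * dot3 (B (t, x)) (grad3 g (t, x))
      = -∫ x, g (t, x) * dot3 (B (t, x)) (grad3 f (t, x)) := by
  have hleibniz (p : ℝ × V3) : dot3 (B p) (grad3 (fun q => f q * g q) p)
      = f p * dot3 (B p) (grad3 g p) + g p * dot3 (B p) (grad3 f p) := by
    rw [grad3_mul (hf.differentiable one_ne_zero p) (hg.differentiable one_ne_zero p)]
    simp only [dot3, Pi.add_apply, Pi.smul_apply, smul_eq_mul, Fin.sum_univ_three]
    ring
  have hflux := integral_dot3_grad3_eq_zero hB hdivB hBt (hf.mul hg)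
  simp only [hleibniz] at hflux
  rw [integral_add
    (integrable_mul_dot3 hf.continuous hB.continuous (continuous_grad3 hg) hBt)
    (integrable_mul_dot3 hg.continuous hB.continuous (continuous_grad3 hf) hBt)] at hflux
  exact eq_neg_of_add_eq_zero_left hflux

end SpatialIntegrals

section Helicity

open scoped Topology

variable {c t : ℝ} {A0 : ℝ × V3 → ℝ} {A : ℝ × V3 → V3} {K : Set V3}

lemma dot3_eq_of_add_cross3_div_eq {a b e f : V3} (h : ∀ i, e i + cross3 a b i / c = f i) :
    dot3 b e = dot3 b f := by
  have hcross : dot3 b (cross3 a b) / c = 0 := by rw [dot3_cross3_self, zero_div]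
  simp only [dot3, ← h, Fin.sum_univ_three] at hcross ⊢
  linear_combination -hcross

lemma neg_mul_dot3_Efield (hc : c ≠ 0) (b : V3) (p : ℝ × V3) :
    -c * dot3 b (Efield c A0 A p) = dot3 b (pdt3 A p) + c * dot3 b (grad3 A0 p) := by
  have hE (i : Fin 3) : -c * Efield c A0 A p i = pdt3 A p i + c * grad3 A0 p i := by
    simp only [pdt3, pdt, Efield]
    field_simp
    ring
  simp only [dot3, Finset.mul_sum, ← Finset.sum_add_distrib]
  exact Finset.sum_congr rfl fun i _ => by linear_combination b i * hE i

lemma hasDerivAt_semiHelicity (hA : ContDiff ℝ 2 A) (hK : IsCompact K)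
    (hAK : ∀ᶠ s in 𝓝 t, ∀ x ∉ K, A (s, x) = 0) :
    HasDerivAt (semiHelicity A) (2 * ∫ x, dot3 (Bfield A (t, x)) (pdt3 A (t, x))) t := by
  have hA1 : ContDiff ℝ 1 A := hA.of_le one_le_two
  have hB : ContDiff ℝ 1 (Bfield A) := contDiff_curl3 hA (by norm_num)
  have hdA : ContDiff ℝ 1 (pdt3 A) := contDiff_pdt3 hA (by norm_num)
  have hAt : HasCompactSupport fun x => A (t, x) := .intro hK hAK.self_of_nhds
  have hBt : HasCompactSupport fun x => Bfield A (t, x) :=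
    hasCompactSupport_curl3 (hA1.differentiable one_ne_zero) hAt
  have hderiv := hasDerivAt_integral_of_contDiff_of_eq_zero (μ := volume)
    (contDiff_dot3 hA1 hB) hK (hAK.mono fun s hs x hx => by simp [dot3, hs x hx])
  have hdensity (x : V3) : pdt (fun q => dot3 (A q) (Bfield A q)) (t, x)
      = dot3 (A (t, x)) (curl3 (pdt3 A) (t, x)) + dot3 (Bfield A (t, x)) (pdt3 A (t, x)) := by
    rw [pdt_dot3 (hA1.differentiable one_ne_zero _) (hB.differentiable one_ne_zero _),
      ← pdt3_curl3 hA]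
    rfl
  refine hderiv.congr_deriv ?_
  calc ∫ x, pdt (fun q => dot3 (A q) (Bfield A q)) (t, x)
      = (∫ x, dot3 (A (t, x)) (curl3 (pdt3 A) (t, x)))
          + ∫ x, dot3 (Bfield A (t, x)) (pdt3 A (t, x)) := by
        simp only [hdensity]
        exact integral_add
          (integrable_dot3 hA1.continuous (continuous_curl3 hdA) hAt)
          (integrable_dot3 hB.continuous hdA.continuous hBt)
    _ = 2 * ∫ x, dot3 (Bfield A (t, x)) (pdt3 A (t, x)) := by
        rw [integral_dot3_curl3_comm hA1 hdA hAt, two_mul]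
        rfl

lemma neg_mul_integral_dot3_Bfield_Efield (hc : c ≠ 0) (hA0 : ContDiff ℝ 1 A0)
    (hA : ContDiff ℝ 2 A) (hAt : HasCompactSupport fun x => A (t, x)) :
    -c * ∫ x, dot3 (Bfield A (t, x)) (Efield c A0 A (t, x))
      = ∫ x, dot3 (Bfield A (t, x)) (pdt3 A (t, x)) := by
  have hB : ContDiff ℝ 1 (Bfield A) := contDiff_curl3 hA (by norm_num)
  have hBt : HasCompactSupport fun x => Bfield A (t, x) :=
    hasCompactSupport_curl3 (hA.differentiable two_ne_zero) hAt
  have hdA : ContDiff ℝ 1 (pdt3 A) := contDiff_pdt3 hA (by norm_num)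
  have gauge_term_zero : ∫ x, dot3 (Bfield A (t, x)) (grad3 A0 (t, x)) = 0 :=
    integral_dot3_grad3_eq_zero hB (fun x => div3_curl3 hA (t, x)) hBt hA0
  rw [← integral_const_mul]
  simp only [neg_mul_dot3_Efield hc]
  rw [integral_add (integrable_dot3 hB.continuous hdA.continuous hBt)
      ((integrable_dot3 hB.continuous (continuous_grad3 hA0) hBt).const_mul c),
    integral_const_mul, gauge_term_zero, mul_zero, add_zero]

theorem semi_helicity_evolution_general {θ γinv : ℝ × V3 → ℝ} {v : ℝ × V3 → V3}
    (hc : c ≠ 0) (hA0 : ContDiff ℝ 1 A0) (hA : ContDiff ℝ 2 A) (hθ : ContDiff ℝ 1 θ)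
    (hγinv : ContDiff ℝ 1 γinv) (hK : IsCompact K)
    (hAK : ∀ᶠ s in 𝓝 t, ∀ x ∉ K, A (s, x) = 0)
    (heqm : ∀ x, ∀ i, Efield c A0 A (t, x) i + cross3 (v (t, x)) (Bfield A (t, x)) i / c
      = -(c⁻¹ * γinv (t, x)) * grad3 θ (t, x) i) :
    HasDerivAt (semiHelicity A)
        (2 * ∫ x, γinv (t, x) * dot3 (Bfield A (t, x)) (grad3 θ (t, x))) t ∧
      2 * ∫ x, γinv (t, x) * dot3 (Bfield A (t, x)) (grad3 θ (t, x))
        = -2 * ∫ x, θ (t, x) * dot3 (Bfield A (t, x)) (grad3 γinv (t, x)) := by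
  have hAt : HasCompactSupport fun x => A (t, x) := .intro hK hAK.self_of_nhds
  have hBt : HasCompactSupport fun x => Bfield A (t, x) :=
    hasCompactSupport_curl3 (hA.differentiable two_ne_zero) hAt
  have hEB (x : V3) : -c * dot3 (Bfield A (t, x)) (Efield c A0 A (t, x))
      = γinv (t, x) * dot3 (Bfield A (t, x)) (grad3 θ (t, x)) := by
    rw [dot3_eq_of_add_cross3_div_eq (heqm x)]
    simp only [dot3, Finset.mul_sum]
    refine Finset.sum_congr rfl fun i _ => ?_
    field_simp
  refine ⟨(hasDerivAt_semiHelicity hA hK hAK).congr_deriv ?_, ?_⟩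
  · rw [← neg_mul_integral_dot3_Bfield_Efield hc hA0 hA hAt, ← integral_const_mul]
    simp only [hEB]
  · rw [integral_mul_dot3_grad3 (B := Bfield A) (contDiff_curl3 hA (by norm_num))
      (fun x => div3_curl3 hA (t, x)) hBt hγinv hθ, mul_neg, neg_mul]

end Helicity

/-- Evolution of the semi-relativistic helicity in a barotropic relativistic fluid:
    dC/dt = 2∫ γ⁻¹ ℬ·∇θ d³x = −2∫ θ ℬ·∇(γ⁻¹) d³x. -/
theorem semi_helicity_evolution (c : ℝ) (hc : 0 < c)
    (A0 : ℝ × V3 → ℝ) (A : ℝ × V3 → V3) (θ : ℝ × V3 → ℝ) (v : ℝ × V3 → V3)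
    (hA0 : ContDiff ℝ 2 A0) (hA : ContDiff ℝ 2 A) (hθ : ContDiff ℝ 1 θ)
    (hv : ∀ p, Real.sqrt (dot3 (v p) (v p)) < c)
    (hγ : ∀ p, 1 ≤ gamma3 c v p)
    (hγinv : ContDiff ℝ 1 (fun p => (gamma3 c v p)⁻¹))
    (heqm : ∀ p, ∀ i : Fin 3,
      Efield c A0 A p i + cross3 (v p) (Bfield A p) i / c
        = -((c * gamma3 c v p)⁻¹) * grad3 θ p i)
    (a b : ℝ) (𝒦 : Set V3) (h𝒦 : IsCompact 𝒦)
    (hsupp : ∀ t ∈ Set.Ioo a b, ∀ x : V3, x ∉ 𝒦 → A (t, x) = 0) :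
    ∀ t ∈ Set.Ioo a b,
      HasDerivAt (semiHelicity A)
        (2 * ∫ x : V3, (gamma3 c v (t, x))⁻¹ * dot3 (Bfield A (t, x)) (grad3 θ (t, x))) t
      ∧
      (2 * ∫ x : V3, (gamma3 c v (t, x))⁻¹ * dot3 (Bfield A (t, x)) (grad3 θ (t, x)))
        = -2 * ∫ x : V3,
            θ (t, x) * dot3 (Bfield A (t, x)) (grad3 (fun q => (gamma3 c v q)⁻¹) (t, x)) :=
  fun t ht => semi_helicity_evolution_general hc.ne' (hA0.of_le one_le_two) hA hθ hγinv h𝒦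
    ((isOpen_Ioo.eventually_mem ht).mono hsupp)
    fun x i => by simpa only [mul_inv] using heqm (t, x) i
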